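/- Let k be an algebraically closed field of characteristic p and let V be a finite-dimensional k-vector space equipped with an additive map φ : V → V satisfying φ(c·v) = c^q·φ(v) for all c ∈ k, v ∈ V. Then there exists a unique decomposition V = V^{ss} ⊕ V^{nil} into φ-stable k-subspaces such that (V^{ss}, φ|_{V^{ss}}) is a unit k[F^r]-module and the restriction of φ to V^{nil} is nilpotent (some iterate of φ vanishes on V^{nil}). -/

import Mathlib

/-!
Common definitions: unit `R[F^r]`-modules (Emerton–Kisin / Lyubeznik style), following
the conventions of the paper.  Throughout, `q = p ^ r` and for a commutative ring `R` of
(exponential) characteristic `p`, a unit `R[F^r]`-module is an `R`-module `M` together with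
an additive `q`-semilinear map `φ : M → M` whose induced structural map
`R ⊗_{Frob} M → M`, `c ⊗ m ↦ c • φ m`, is bijective.
-/

open scoped TensorProduct

section Preamble

/-- `R` viewed as a module over itself via the `q = p ^ r`-power Frobenius:
`c • x = c ^ p ^ r * x`. -/
def FrobTwist (p r : ℕ) (R : Type*) : Type _ := R

instance (p r : ℕ) (R : Type*) [CommRing R] : AddCommGroup (FrobTwist p r R) :=
  inferInstanceAs (AddCommGroup R)

noncomputable instance (p r : ℕ) (R : Type*) [CommRing R] [ExpChar R p] :
    Module R (FrobTwist p r R) :=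
  Module.compHom R (iterateFrobenius R p r)

theorem FrobTwist.smul_def {p r : ℕ} {R : Type*} [CommRing R] [ExpChar R p] (c : R)
    (x : FrobTwist p r R) : c • x = (c ^ p ^ r * (show R from x) : R) := rfl

variable (p r : ℕ)
variable (R : Type*) [CommRing R] [ExpChar R p]
variable {M : Type*} [AddCommGroup M] [Module R M]

/-- `φ` is additive and `q = p ^ r`-semilinear: `φ (c • m) = c ^ q • φ m`. -/
def IsFrobSemilinear (φ : M →+ M) : Prop :=
  ∀ (c : R) (m : M), φ (c • m) = c ^ p ^ r • φ m

/-- The structural map `R ⊗_{Frob} M → M`, `c ⊗ m ↦ c • φ m`. -/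
noncomputable def unitMap (φ : M →+ M) (hφ : IsFrobSemilinear p r R φ) :
    FrobTwist p r R ⊗[R] M →+ M :=
  TensorProduct.liftAddHom
    (AddMonoidHom.mk'
      (fun c : FrobTwist p r R =>
        AddMonoidHom.mk' (fun m : M => (show R from c) • φ m)
          (fun m m' => by
            show (show R from c) • φ (m + m') =
              (show R from c) • φ m + (show R from c) • φ m'
            rw [map_add, smul_add]))
      (fun c c' => by
        ext m
        show ((show R from c) + (show R from c')) • φ m = _
        rw [add_smul]
        rfl))
    (fun a c m => by
      show (a ^ p ^ r * (show R from c)) • φ m = (show R from c) • φ (a • m)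
      rw [hφ, mul_comm, mul_smul])

/-- `(M, φ)` is a unit `R[F^r]`-module: `φ` is `q = p ^ r`-semilinear and the induced
structural map `R ⊗_{Frob} M → M` is bijective. -/
def IsUnitFMod (φ : M →+ M) : Prop :=
  ∃ hφ : IsFrobSemilinear p r R φ, Function.Bijective (unitMap p r R φ hφ)

/-- `(M, φ)` is finitely generated as a left `R[F^r]`-module: there is a finite subset
`s ⊆ M` such that the only `φ`-stable `R`-submodule of `M` containing `s` is `M` itself. -/
def IsFGFMod (φ : M →+ M) : Prop :=
  ∃ s : Finset M, ∀ N : Submodule R M, (∀ x ∈ N, φ x ∈ N) → (↑s : Set M) ⊆ ↑N → N = ⊤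

/-- A root of `(M, φ)`: a finitely generated submodule `M₀` such that the submodule
generated by `φ (M₀)` contains `M₀`, and such that the only `φ`-stable submodule
containing `M₀` is `M` itself. -/
def IsRoot (φ : M →+ M) (M₀ : Submodule R M) : Prop :=
  M₀.FG ∧ M₀ ≤ Submodule.span R (⇑φ '' ↑M₀) ∧
    ∀ N : Submodule R M, (∀ x ∈ N, φ x ∈ N) → M₀ ≤ N → N = ⊤

end Preamble

section Statement17

variable (p r : ℕ) [Fact p.Prime]
variable (k : Type*) [Field k] [IsAlgClosed k] [CharP k p]
variable {V : Type*} [AddCommGroup V] [Module k V]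

/-- `(Vss, Vnil)` is a Fitting decomposition of `(V, φ)`: `V = Vss ⊕ Vnil`, both are
`φ`-stable, `(Vss, φ|_{Vss})` is a unit `k[F^r]`-module, and `φ` is nilpotent on
`Vnil`. -/
def IsFittingDecomp (φ : V →+ V) (Vss Vnil : Submodule k V) : Prop :=
  IsCompl Vss Vnil ∧
  (∀ v ∈ Vss, φ v ∈ Vss) ∧ (∀ v ∈ Vnil, φ v ∈ Vnil) ∧
  (∃ φs : Vss →+ Vss, (∀ v : Vss, ((φs v : Vss) : V) = φ (v : V)) ∧
    IsUnitFMod p r k φs) ∧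
  (∃ N : ℕ, ∀ v ∈ Vnil, (⇑φ)^[N] v = 0)

/-!
When the Frobenius of `R` is surjective, the images of the iterates of `φ` are submodules and every
element of `R ⊗_{Frob} M` is of the form `1 ⊗ m`, so that a bijective `φ` is unit and a unit `φ` is
surjective.  Fitting's argument then applies: for a module of finite length the kernels and the
images of `φ^n` stabilize, and their limits are complementary.  In any other decomposition the unit
part lies in every image and the nilpotent part in some kernel; complementary submodules contained
in complementary submodules are equal to them.
-/

theorem eq_of_isCompl_of_isCompl_of_le_of_le {α : Type*} [Lattice α] [BoundedOrder α]
    [IsModularLattice α] {a b a' b' : α} (h : IsCompl a b) (h' : IsCompl a' b')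
    (ha : a' ≤ a) (hb : b' ≤ b) : a' = a :=
  eq_of_le_of_inf_le_of_le_sup ha ((h.disjoint.mono_right hb).le_bot.trans bot_le)
    (le_top.trans_eq h'.sup_eq_top.symm)

section SemilinearFitting

variable {R M : Type*} [Ring R] [AddCommGroup M] [Module R M] {σ : R →+* R}
  (φ : M →ₛₗ[σ] M)

/-- The kernel of the `n`-th iterate of a semilinear endomorphism `φ`. It is encoded as an iterated
preimage because `φ^[n]` is semilinear over `σ ^ n`, which depends on `n`. -/
def kerIterate (n : ℕ) : Submodule R M :=
  (Submodule.comap φ)^[n] ⊥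

/-- The elements killed by some iterate of `φ`: the nilpotent part of the Fitting decomposition. -/
def nilPart : Submodule R M :=
  ⨆ n, kerIterate φ n

variable {φ} in
theorem mem_kerIterate {n : ℕ} {x : M} : x ∈ kerIterate φ n ↔ φ^[n] x = 0 := by
  induction n generalizing x with
  | zero => rfl
  | succ n ih =>
    rw [kerIterate, Function.iterate_succ_apply', Submodule.mem_comap, Function.iterate_succ_apply]
    exact ih

theorem kerIterate_monotone : Monotone (kerIterate φ) :=
  Monotone.monotone_iterate_of_le_map (fun _ _ => Submodule.comap_mono) bot_le

variable {φ} in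
theorem mem_nilPart {x : M} : x ∈ nilPart φ ↔ ∃ n, φ^[n] x = 0 := by
  simp_rw [nilPart, Submodule.mem_iSup_of_directed _ (kerIterate_monotone φ).directed_le,
    mem_kerIterate]

theorem map_mem_nilPart_iff {x : M} : φ x ∈ nilPart φ ↔ x ∈ nilPart φ := by
  simp_rw [mem_nilPart, ← Function.iterate_succ_apply]
  refine ⟨fun ⟨n, hn⟩ => ⟨n + 1, hn⟩, fun ⟨n, hn⟩ => ⟨n, ?_⟩⟩
  rw [Function.iterate_succ_apply', hn, map_zero]

theorem exists_nilPart_eq_kerIterate [IsNoetherian R M] : ∃ n, nilPart φ = kerIterate φ n :=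
  ⟨_, WellFoundedGT.iSup_eq_monotonicSequenceLimit ⟨kerIterate φ, kerIterate_monotone φ⟩⟩

variable [RingHomSurjective σ]

/-- The image of the `n`-th iterate of a semilinear endomorphism `φ`, encoded as an iterated image
for the same reason as `kerIterate`. -/
def rangeIterate (n : ℕ) : Submodule R M :=
  (Submodule.map φ)^[n] ⊤

/-- The elements lying in the image of every iterate of `φ`: the part of the Fitting decomposition
on which `φ` is bijective. -/
def stablePart : Submodule R M :=
  ⨅ n, rangeIterate φ n

variable {φ} in
theorem mem_rangeIterate {n : ℕ} {x : M} : x ∈ rangeIterate φ n ↔ ∃ y, φ^[n] y = x := by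
  induction n generalizing x with
  | zero => exact ⟨fun _ => ⟨x, rfl⟩, fun _ => trivial⟩
  | succ n ih =>
    simp_rw [rangeIterate, Function.iterate_succ_apply', Submodule.mem_map]
    exact (exists_congr fun _ => and_congr_left' ih).trans exists_exists_eq_and

theorem rangeIterate_antitone : Antitone (rangeIterate φ) :=
  Monotone.antitone_iterate_of_map_le (fun _ _ => Submodule.map_mono) le_top

theorem map_rangeIterate (n : ℕ) :
    (rangeIterate φ n).map φ = rangeIterate φ (n + 1) :=
  (Function.iterate_succ_apply' _ _ _).symm

variable {φ} in
theorem le_stablePart_of_le_map {S : Submodule R M} (hS : S ≤ S.map φ) : S ≤ stablePart φ := by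
  refine le_iInf fun n => ?_
  induction n with
  | zero => exact le_top
  | succ n ih => exact hS.trans ((Submodule.map_mono ih).trans_eq (map_rangeIterate φ n))

theorem map_mem_stablePart {x : M} (hx : x ∈ stablePart φ) : φ x ∈ stablePart φ := by
  refine (Submodule.mem_iInf _).2 fun n => rangeIterate_antitone φ n.le_succ ?_
  exact (map_rangeIterate φ n).le (Submodule.mem_map_of_mem ((Submodule.mem_iInf _).1 hx n))

theorem exists_stablePart_eq_rangeIterate [IsArtinian R M] :
    ∃ n, stablePart φ = rangeIterate φ n :=
  ⟨_, WellFoundedGT.iSup_eq_monotonicSequenceLimit (α := (Submodule R M)ᵒᵈ)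
    ⟨OrderDual.toDual ∘ rangeIterate φ, rangeIterate_antitone φ⟩⟩

theorem map_stablePart [IsArtinian R M] : (stablePart φ).map φ = stablePart φ := by
  refine le_antisymm (Submodule.map_le_iff_le_comap.2 fun _ => map_mem_stablePart φ) ?_
  obtain ⟨n, hn⟩ := exists_stablePart_eq_rangeIterate φ
  calc stablePart φ ≤ rangeIterate φ (n + 1) := iInf_le _ _
    _ = (stablePart φ).map φ := by rw [hn, map_rangeIterate]

theorem disjoint_stablePart_nilPart [IsNoetherian R M] :
    Disjoint (stablePart φ) (nilPart φ) := by
  obtain ⟨n, hn⟩ := exists_nilPart_eq_kerIterate φ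
  refine Submodule.disjoint_def.2 fun x hx hx' => ?_
  obtain ⟨y, rfl⟩ := mem_rangeIterate.1 ((iInf_le _ n : stablePart φ ≤ _) hx)
  have hy : y ∈ nilPart φ := by
    rw [hn, mem_kerIterate, ← Function.iterate_add_apply] at hx'
    exact mem_nilPart.2 ⟨n + n, hx'⟩
  rwa [hn, mem_kerIterate] at hy

theorem codisjoint_stablePart_nilPart [IsArtinian R M] :
    Codisjoint (stablePart φ) (nilPart φ) := by
  obtain ⟨n, hn⟩ := exists_stablePart_eq_rangeIterate φ
  refine Submodule.codisjoint_iff_exists_add_eq.2 fun v => ?_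
  have hv : φ^[n] v ∈ stablePart φ := hn ▸ mem_rangeIterate.2 ⟨v, rfl⟩
  obtain ⟨w, hw⟩ := mem_rangeIterate.1 ((iInf_le _ (n + n) : stablePart φ ≤ _) hv)
  rw [Function.iterate_add_apply] at hw
  refine ⟨φ^[n] w, v - φ^[n] w, hn ▸ mem_rangeIterate.2 ⟨w, rfl⟩, mem_nilPart.2 ⟨n, ?_⟩,
    add_sub_cancel _ _⟩
  rw [iterate_map_sub, hw, sub_self]

theorem isCompl_stablePart_nilPart [IsNoetherian R M] [IsArtinian R M] :
    IsCompl (stablePart φ) (nilPart φ) :=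
  ⟨disjoint_stablePart_nilPart φ, codisjoint_stablePart_nilPart φ⟩

theorem bijective_restrict_stablePart [IsNoetherian R M] [IsArtinian R M] :
    Function.Bijective (φ.restrict fun _ => map_mem_stablePart φ) := by
  constructor
  · refine (injective_iff_map_eq_zero _).2 fun x hx => Subtype.ext ?_
    have hφx : φ x = 0 := congrArg Subtype.val hx
    exact Submodule.disjoint_def.1 (disjoint_stablePart_nilPart φ) x x.2 (mem_nilPart.2 ⟨1, hφx⟩)
  · rintro ⟨x, hx⟩
    obtain ⟨y, hy, rfl⟩ := (map_stablePart φ).ge hx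
    exact ⟨⟨y, hy⟩, rfl⟩

end SemilinearFitting

section UnitModules

variable {p r : ℕ} {R : Type*} [CommRing R] [ExpChar R p]
  {M : Type*} [AddCommGroup M] [Module R M]

/-- A `q`-semilinear map in the sense of `IsFrobSemilinear`, bundled as a semilinear map along the
`q`-power Frobenius. -/
def IsFrobSemilinear.toSemilinearMap {φ : M →+ M} (hφ : IsFrobSemilinear p r R φ) :
    M →ₛₗ[iterateFrobenius R p r] M where
  __ := φ
  map_smul' := hφ

instance ringHomSurjective_iterateFrobenius [PerfectRing R p] :
    RingHomSurjective (iterateFrobenius R p r) :=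
  ⟨(bijective_iterateFrobenius R p r).surjective⟩

variable (p r R) in
/-- The canonical map `m ↦ 1 ⊗ m` from `M` to its base change along the `q`-power Frobenius. -/
noncomputable def toFrobBaseChange : M →+ FrobTwist p r R ⊗[R] M :=
  (TensorProduct.mk R (FrobTwist p r R) M (show FrobTwist p r R from (1 : R))).toAddMonoidHom

theorem unitMap_comp_toFrobBaseChange {φ : M →+ M} (hφ : IsFrobSemilinear p r R φ) :
    unitMap p r R φ hφ ∘ toFrobBaseChange p r R = φ :=
  funext fun m => one_smul R (φ m)

variable [RingHomSurjective (iterateFrobenius R p r)]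

theorem toFrobBaseChange_surjective :
    Function.Surjective (toFrobBaseChange p r R : M → FrobTwist p r R ⊗[R] M) := by
  intro t
  induction t with
  | zero => exact ⟨0, map_zero _⟩
  | tmul c m =>
    obtain ⟨d, rfl⟩ := (iterateFrobenius R p r).surjective c
    have hd : d • (show FrobTwist p r R from (1 : R)) = iterateFrobenius R p r d :=
      mul_one (d ^ p ^ r)
    exact ⟨d • m, (TensorProduct.smul_tmul _ _ _).symm.trans (congrArg (· ⊗ₜ[R] m) hd)⟩
  | add x y hx hy =>
    obtain ⟨a, rfl⟩ := hx
    obtain ⟨b, rfl⟩ := hy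
    exact ⟨a + b, map_add _ a b⟩

theorem isUnitFMod_of_bijective {φ : M →+ M} (hφ : IsFrobSemilinear p r R φ)
    (h : Function.Bijective φ) : IsUnitFMod p r R φ := by
  rw [← unitMap_comp_toFrobBaseChange hφ] at h
  exact ⟨hφ, h.injective.of_comp_right toFrobBaseChange_surjective, h.surjective.of_comp⟩

theorem IsUnitFMod.surjective {φ : M →+ M} (h : IsUnitFMod p r R φ) : Function.Surjective φ := by
  obtain ⟨hφ, hbij⟩ := h
  rw [← unitMap_comp_toFrobBaseChange hφ]
  exact hbij.surjective.comp toFrobBaseChange_surjective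

end UnitModules

section UnitNilDecomposition

/-- `(Mss, Mnil)` is a Fitting decomposition of `(M, φ)` over an arbitrary coefficient ring of
exponential characteristic `p`. The conjuncts are those of `IsFittingDecomp`, so that the two
notions are definitionally equal over an algebraically closed field. -/
def IsUnitNilDecomp (p r : ℕ) (R : Type*) [CommRing R] [ExpChar R p] {M : Type*} [AddCommGroup M]
    [Module R M] (φ : M →+ M) (Mss Mnil : Submodule R M) : Prop :=
  IsCompl Mss Mnil ∧
  (∀ v ∈ Mss, φ v ∈ Mss) ∧ (∀ v ∈ Mnil, φ v ∈ Mnil) ∧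
  (∃ φs : Mss →+ Mss, (∀ v : Mss, ((φs v : Mss) : M) = φ (v : M)) ∧
    IsUnitFMod p r R φs) ∧
  (∃ N : ℕ, ∀ v ∈ Mnil, φ^[N] v = 0)

variable {p r : ℕ} {R : Type*} [CommRing R] [ExpChar R p]
  {M : Type*} [AddCommGroup M] [Module R M] {φ : M →+ M}

theorem IsUnitNilDecomp.le_nilPart {Mss Mnil : Submodule R M}
    (h : IsUnitNilDecomp p r R φ Mss Mnil) (hφ : IsFrobSemilinear p r R φ) :
    Mnil ≤ nilPart hφ.toSemilinearMap := by
  obtain ⟨-, -, -, -, N, hN⟩ := h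
  exact fun v hv => mem_nilPart.2 ⟨N, hN v hv⟩

variable [RingHomSurjective (iterateFrobenius R p r)]

theorem isUnitNilDecomp_stablePart_nilPart [IsNoetherian R M] [IsArtinian R M]
    (hφ : IsFrobSemilinear p r R φ) :
    IsUnitNilDecomp p r R φ (stablePart hφ.toSemilinearMap) (nilPart hφ.toSemilinearMap) := by
  set ψ := hφ.toSemilinearMap
  let ψs := ψ.restrict fun _ => map_mem_stablePart ψ
  have hψs : IsFrobSemilinear p r R ψs.toAddMonoidHom := ψs.map_smul'
  obtain ⟨n, hn⟩ := exists_nilPart_eq_kerIterate ψ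
  exact ⟨isCompl_stablePart_nilPart ψ, fun _ => map_mem_stablePart ψ,
    fun _ => (map_mem_nilPart_iff ψ).2,
    ⟨ψs.toAddMonoidHom, fun _ => rfl,
      isUnitFMod_of_bijective hψs (bijective_restrict_stablePart ψ)⟩,
    n, fun v hv => mem_kerIterate.1 (hn.le hv)⟩

theorem IsUnitNilDecomp.le_stablePart {Mss Mnil : Submodule R M}
    (h : IsUnitNilDecomp p r R φ Mss Mnil) (hφ : IsFrobSemilinear p r R φ) :
    Mss ≤ stablePart hφ.toSemilinearMap := by
  obtain ⟨-, -, -, ⟨φs, hφs, hunit⟩, -⟩ := h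
  refine le_stablePart_of_le_map fun v hv => ?_
  obtain ⟨u, hu⟩ := hunit.surjective ⟨v, hv⟩
  exact ⟨u, u.2, (hφs u).symm.trans (congrArg Subtype.val hu)⟩

theorem statement17_general [IsNoetherian R M] [IsArtinian R M] (hφ : IsFrobSemilinear p r R φ) :
    ∃ Mss Mnil : Submodule R M, IsUnitNilDecomp p r R φ Mss Mnil ∧
      ∀ Mss' Mnil' : Submodule R M,
        IsUnitNilDecomp p r R φ Mss' Mnil' → Mss' = Mss ∧ Mnil' = Mnil := by
  have hfit := isCompl_stablePart_nilPart hφ.toSemilinearMap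
  refine ⟨_, _, isUnitNilDecomp_stablePart_nilPart hφ, fun Mss' Mnil' h => ?_⟩
  have hss := h.le_stablePart hφ
  have hnil := h.le_nilPart hφ
  exact ⟨eq_of_isCompl_of_isCompl_of_le_of_le hfit h.1 hss hnil,
    eq_of_isCompl_of_isCompl_of_le_of_le hfit.symm h.1.symm hnil hss⟩

end UnitNilDecomposition

/-- Fitting decomposition: every `q`-semilinear endomorphism `φ` of a
finite-dimensional vector space `V` over an algebraically closed field `k` of
characteristic `p` admits a unique decomposition `V = V^ss ⊕ V^nil` into `φ`-stable
subspaces with `(V^ss, φ)` unit and `φ` nilpotent on `V^nil`. -/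
theorem statement17 (hr : 0 < r) [FiniteDimensional k V]
    (φ : V →+ V) (hφ : IsFrobSemilinear p r k φ) :
    ∃ Vss Vnil : Submodule k V, IsFittingDecomp p r k φ Vss Vnil ∧
      ∀ Vss' Vnil' : Submodule k V,
        IsFittingDecomp p r k φ Vss' Vnil' → Vss' = Vss ∧ Vnil' = Vnil :=
  statement17_general hφ

end Statement17
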